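/- Let D be a positive natural number, p : ℝ → ℝ^D → ℝ a smooth everywhere-positive function, F : ℝ → ℝ^D → ℝ^D a smooth time-dependent vector field, g : ℝ → ℝ, and β : ℝ → ℝ. If p satisfies the Fokker–Planck equation ∂_t p(t,x) = -div_x(F(t,x)·p(t,x)) + (1/2)·g(t)²·Δ_x p(t,x) for all t ∈ ℝ and x ∈ ℝ^D, then for all t and x: ∂_t log p(t,x) + ⟨∇_x log p(t,x), F(t,x) - (1/2 + β(t))·g(t)²·∇_x log p(t,x)⟩ - β(t)·g(t)²·Δ_x log p(t,x) = -div_x F(t,x) - (β(t) - 1/2)·g(t)²·Δ_x log p(t,x) - β(t)·g(t)²·‖∇_x log p(t,x)‖². -/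

import Mathlib

open scoped BigOperators RealInnerProductSpace
open MeasureTheory

/-- Divergence of a vector field on `EuclideanSpace ℝ (Fin D)`. -/
noncomputable def divg {D : ℕ} (F : EuclideanSpace ℝ (Fin D) → EuclideanSpace ℝ (Fin D))
    (x : EuclideanSpace ℝ (Fin D)) : ℝ :=
  ∑ i, fderiv ℝ F x (EuclideanSpace.single i 1) i

/-- Laplacian of a scalar field on `EuclideanSpace ℝ (Fin D)`. -/
noncomputable def lap {D : ℕ} (f : EuclideanSpace ℝ (Fin D) → ℝ)
    (x : EuclideanSpace ℝ (Fin D)) : ℝ :=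
  divg (gradient f) x

theorem divg_smul_aux {D : ℕ} (f : EuclideanSpace ℝ (Fin D) → ℝ)
    (G : EuclideanSpace ℝ (Fin D) → EuclideanSpace ℝ (Fin D)) (x : EuclideanSpace ℝ (Fin D))
    (hf : DifferentiableAt ℝ f x) (hG : DifferentiableAt ℝ G x) :
    divg (fun y => f y • G y) x = f x * divg G x + ⟪gradient f x, G x⟫ := by
  have h1 : ⟪gradient f x, G x⟫ = ∑ i, fderiv ℝ f x (EuclideanSpace.single i 1) * G x i := by
    have h2 : ∀ i, fderiv ℝ f x (EuclideanSpace.single i 1) = gradient f x i := by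
      intro i
      rw [hf.hasGradientAt.hasFDerivAt.fderiv]
      rw [InnerProductSpace.toDual_apply_apply, EuclideanSpace.inner_single_right]
      simp
    simp only [h2, PiLp.inner_apply]
    refine Finset.sum_congr rfl fun i _ => ?_
    simp [mul_comm]
  rw [h1]
  unfold divg
  rw [fderiv_fun_smul hf hG, Finset.mul_sum, ← Finset.sum_add_distrib]
  refine Finset.sum_congr rfl fun i _ => ?_
  simp

theorem differentiable_gradient_aux {D : ℕ} (f : EuclideanSpace ℝ (Fin D) → ℝ)
    (hf : ContDiff ℝ (⊤ : ℕ∞) f) : Differentiable ℝ (gradient f) := by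
  have h : Differentiable ℝ (fderiv ℝ f) :=
    (hf.fderiv_right (m := ((⊤ : ℕ∞) : WithTop ℕ∞)) le_rfl).differentiable (by simp)
  exact (InnerProductSpace.toDual ℝ
    (EuclideanSpace ℝ (Fin D))).symm.toContinuousLinearEquiv.differentiable.comp h

/-- Itô drift of `log p` along the general β-reverse SDE of Karras et al.
(analytic core of the Appendix G reverse proposition). -/
theorem ito_drift_general_reverse {D : ℕ} (hD : 0 < D)
    (p : ℝ → EuclideanSpace ℝ (Fin D) → ℝ)
    (F : ℝ → EuclideanSpace ℝ (Fin D) → EuclideanSpace ℝ (Fin D))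
    (g β : ℝ → ℝ)
    (hp : ContDiff ℝ (⊤ : ℕ∞) (fun q : ℝ × EuclideanSpace ℝ (Fin D) => p q.1 q.2))
    (hppos : ∀ t x, 0 < p t x)
    (hF : ContDiff ℝ (⊤ : ℕ∞) (fun q : ℝ × EuclideanSpace ℝ (Fin D) => F q.1 q.2))
    (hFP : ∀ t x, deriv (fun τ => p τ x) t
      = - divg (fun y => p t y • F t y) x + (1 / 2) * g t ^ 2 * lap (p t) x) :
    ∀ t x, deriv (fun τ => Real.log (p τ x)) t
        + ⟪gradient (fun y => Real.log (p t y)) x,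
            F t x - ((1 / 2 + β t) * g t ^ 2) • gradient (fun y => Real.log (p t y)) x⟫
        - β t * g t ^ 2 * lap (fun y => Real.log (p t y)) x
      = - divg (F t) x
        - (β t - 1 / 2) * g t ^ 2 * lap (fun y => Real.log (p t y)) x
        - β t * g t ^ 2 * ‖gradient (fun y => Real.log (p t y)) x‖ ^ 2 := by
  intro t x
  have hpt : ContDiff ℝ (⊤ : ℕ∞) (p t) := hp.comp (contDiff_const.prodMk contDiff_id)
  have hFt : ContDiff ℝ (⊤ : ℕ∞) (F t) := hF.comp (contDiff_const.prodMk contDiff_id)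
  have hpx : ContDiff ℝ (⊤ : ℕ∞) (fun τ => p τ x) := hp.comp (contDiff_id.prodMk contDiff_const)
  have hpd : Differentiable ℝ (p t) := hpt.differentiable (by simp)
  have hFd : Differentiable ℝ (F t) := hFt.differentiable (by simp)
  have hxd : Differentiable ℝ (fun τ => p τ x) := hpx.differentiable (by simp)
  have hL : ContDiff ℝ (⊤ : ℕ∞) (fun y => Real.log (p t y)) :=
    hpt.log (fun y => (hppos t y).ne')
  have hgd := differentiable_gradient_aux _ hL
  have hgrad : gradient (p t) = fun y => p t y • gradient (fun y => Real.log (p t y)) y := by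
    funext y
    have h := fderiv.log (hpd y) (hppos t y).ne'
    unfold gradient
    rw [h, map_smul, smul_smul, mul_inv_cancel₀ (hppos t y).ne', one_smul]
  have hlap : lap (p t) x = p t x * lap (fun y => Real.log (p t y)) x
      + p t x * ‖gradient (fun y => Real.log (p t y)) x‖ ^ 2 := by
    unfold lap
    conv_lhs => rw [hgrad]
    rw [divg_smul_aux _ _ x (hpd x) (hgd x), congrFun hgrad x, real_inner_smul_left,
      real_inner_self_eq_norm_sq]
  have hdt : deriv (fun τ => Real.log (p τ x)) t = deriv (fun τ => p τ x) t / p t x :=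
    deriv.log (hxd t) (hppos t x).ne'
  have hne := (hppos t x).ne'
  rw [hdt, hFP, hlap, divg_smul_aux _ _ x (hpd x) (hFd x), congrFun hgrad x,
    real_inner_smul_left, inner_sub_right, real_inner_smul_right, real_inner_self_eq_norm_sq]
  field_simp
  ring
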